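/- Let A be a commutative noetherian local ring, let x, y ∈ A be a regular exact pair of zero divisors, and let (b_n)_{n ≥ 1} be a sequence of elements of A, each regular on the A-module A/(x, y). Define a_n = b_1 ⋯ b_n. Then the A-modules G_{a_1}, G_{a_2}, G_{a_3}, … , H_{a_1}, H_{a_2}, H_{a_3}, … are all indecomposable, non-free, totally reflexive, and pairwise non-isomorphic. Furthermore, for all m, n ≥ 1 there are A-module isomorphisms Hom_A(H_{a_m}, G_{a_n}) ≅ G_{a_m a_n}, Hom_A(G_{a_m}, H_{a_n}) ≅ H_{a_m a_n}, and Hom_A(G_{a_m}, G_{a_n}) ≅ Hom_A(H_{a_n}, H_{a_m}) ≅ H_{b_{n+1} ⋯ b_m} if m ≥ n and ≅ G_{b_{m+1} ⋯ b_n} if m ≤ n (where an empty product is 1). -/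

import Mathlib

/-!
Formalization of results from "Construction of totally reflexive modules
from an exact pair of zero divisors" by Henrik Holm.
-/

noncomputable section

/-- Non-units `x, y` in `A` form an *exact pair of zero divisors* if
`Ann_A(x) = (y)` and `Ann_A(y) = (x)`. -/
def IsExactZeroDivisorPair {A : Type*} [CommRing A] (x y : A) : Prop :=
  ¬ IsUnit x ∧ ¬ IsUnit y ∧
    (∀ a : A, a * x = 0 ↔ a ∈ Ideal.span {y}) ∧
    (∀ a : A, a * y = 0 ↔ a ∈ Ideal.span {x})

open Matrix in
/-- The matrix `γ_a = [[x, a], [0, y]]`. -/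
def gammaMat {A : Type*} [CommRing A] (x y a : A) : Matrix (Fin 2) (Fin 2) A :=
  !![x, a; 0, y]

open Matrix in
/-- The matrix `η_a = [[y, -a], [0, x]]`. -/
def etaMat {A : Type*} [CommRing A] (x y a : A) : Matrix (Fin 2) (Fin 2) A :=
  !![y, -a; 0, x]

/-- `G_a`, the cokernel of `γ_a : A² → A²`. -/
abbrev Gmod {A : Type*} [CommRing A] (x y a : A) : Type _ :=
  (Fin 2 → A) ⧸ LinearMap.range (Matrix.toLin' (gammaMat x y a))

/-- `H_a`, the cokernel of `η_a : A² → A²`. -/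
abbrev Hmod {A : Type*} [CommRing A] (x y a : A) : Type _ :=
  (Fin 2 → A) ⧸ LinearMap.range (Matrix.toLin' (etaMat x y a))

universe u

open CategoryTheory in
/-- A finitely generated `A`-module `G` is *totally reflexive* if
`Ext_A^i(G, A) = 0` and `Ext_A^i(Hom_A(G, A), A) = 0` for all `i > 0`, and the
biduality map `G → Hom_A(Hom_A(G, A), A)` is an isomorphism. -/
def IsTotallyReflexive (A : Type u) [CommRing A] (M : Type u)
    [AddCommGroup M] [Module A M] : Prop :=
  Module.Finite A M ∧
  (∀ i : ℕ, 0 < i → Subsingleton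
    (((Ext A (ModuleCat A) i).obj (Opposite.op (ModuleCat.of A M))).obj
      (ModuleCat.of A A))) ∧
  (∀ i : ℕ, 0 < i → Subsingleton
    (((Ext A (ModuleCat A) i).obj
      (Opposite.op (ModuleCat.of A (Module.Dual A M)))).obj (ModuleCat.of A A))) ∧
  Function.Bijective (Module.Dual.eval A M)

/-- An `A`-module is *indecomposable* if it is nonzero and is not the internal
direct sum of two nonzero submodules. -/
def IsIndecomposableModule (A : Type*) [CommRing A] (M : Type*)
    [AddCommGroup M] [Module A M] : Prop :=
  (∃ m : M, m ≠ 0) ∧ ∀ N P : Submodule A M, IsCompl N P → N = ⊥ ∨ P = ⊥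

/-!
Exactness of the pair makes `γ_a` and `η_a` the differentials of a 2-periodic exact complex of free
modules, which is isomorphic to its own dual up to swapping `x` with `y`; hence the cokernels are
totally reflexive.

If `a` is a nonzerodivisor, then `G_a ≅ (y, a)` and `H_a ≅ (x, a)`. A homomorphism `I → J` between
ideals is determined by its value at a nonzerodivisor `i ∈ I`, and the values that occur form the
ideal `(iJ : I)`; computing these colon ideals gives all the modules of homomorphisms. In
particular, the endomorphisms of `(y, a)` are homotheties, so `(y, a)` is indecomposable over a
local ring. An isomorphism `e : I ≅ J` satisfies `i j = e(i) e⁻¹(j)`, so that `i j` lies in the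
product of the ideals of values of `Hom(I, J)` at `i` and of `Hom(J, I)` at `j`. For two of the
modules in question this would put some nonunit nonzerodivisor `d` into `(y, d) (x, d) ⊆ d𝔪`, which
is impossible.

Over a noetherian local ring, Nakayama's lemma shows that an element that is regular on `A/(x, y)`
is a nonzerodivisor of `A`.
-/

section PeriodicResolutions

open CategoryTheory

variable {A : Type u} [CommRing A] {F : Type u} [AddCommGroup F] [Module A F] {f g : F →ₗ[A] F}

/-- The chain complex `⋯ → F → F → F → F` whose differentials are alternately `f` and `g`, the
last one being `g`. -/
def periodicComplex (hfg : Function.Exact f g) (hgf : Function.Exact g f) :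
    ChainComplex (ModuleCat A) ℕ :=
  HomologicalComplex.alternatingConst (ModuleCat.of A F)
    (φ := ModuleCat.ofHom f) (ψ := ModuleCat.ofHom g)
    (by ext v; exact hfg.apply_apply_eq_zero v) (by ext v; exact hgf.apply_apply_eq_zero v)
    fun _ _ => ComplexShape.down_nat_odd_add

lemma periodicComplex_d_of_odd (hfg : Function.Exact f g) (hgf : Function.Exact g f) {n : ℕ}
    (hn : Odd (n + 1)) : (periodicComplex hfg hgf).d (n + 1) n = ModuleCat.ofHom g := by
  have h : ¬ Even (n + 1) := Nat.not_even_iff_odd.2 hn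
  simp only [periodicComplex, HomologicalComplex.alternatingConst, ComplexShape.down_Rel,
    dif_pos, dif_neg h]

lemma periodicComplex_d_of_even (hfg : Function.Exact f g) (hgf : Function.Exact g f) {n : ℕ}
    (hn : Even (n + 1)) : (periodicComplex hfg hgf).d (n + 1) n = ModuleCat.ofHom f := by
  simp only [periodicComplex, HomologicalComplex.alternatingConst, ComplexShape.down_Rel,
    dif_pos, dif_pos hn]

lemma periodicComplex_exact (hfg : Function.Exact f g) (hgf : Function.Exact g f) (n : ℕ) :
    Function.Exact ((periodicComplex hfg hgf).d (n + 2) (n + 1))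
      ((periodicComplex hfg hgf).d (n + 1) n) := by
  rcases Nat.even_or_odd (n + 1) with hn | hn
  · rw [periodicComplex_d_of_odd hfg hgf hn.add_one, periodicComplex_d_of_even hfg hgf hn]
    exact hgf
  · rw [periodicComplex_d_of_even hfg hgf hn.add_one, periodicComplex_d_of_odd hfg hgf hn]
    exact hfg

variable {M : Type u} [AddCommGroup M] [Module A M] {p : F →ₗ[A] M}

/-- The augmentation of `periodicComplex` by `p : F → M`. -/
def periodicAugmentation (hfg : Function.Exact f g) (hgf : Function.Exact g f)
    (hgp : Function.Exact g p) :
    periodicComplex hfg hgf ⟶ (ChainComplex.single₀ (ModuleCat A)).obj (ModuleCat.of A M) :=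
  ((periodicComplex hfg hgf).toSingle₀Equiv _).symm ⟨ModuleCat.ofHom p, by
    rw [periodicComplex_d_of_odd hfg hgf odd_one]
    ext v
    exact hgp.apply_apply_eq_zero v⟩

lemma quasiIso_periodicAugmentation (hfg : Function.Exact f g) (hgf : Function.Exact g f)
    (hgp : Function.Exact g p) (hp : Function.Surjective p) :
    QuasiIso (periodicAugmentation hfg hgf hgp) := by
  refine ⟨fun n => ?_⟩
  cases n with
  | zero =>
    rw [ChainComplex.quasiIsoAt₀_iff, ShortComplex.quasiIso_iff_of_zeros' _ rfl rfl rfl]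
    refine ⟨?_, (ModuleCat.epi_iff_surjective _).2 hp⟩
    rw [ShortComplex.ShortExact.moduleCat_exact_iff_function_exact]
    change Function.Exact ((periodicComplex hfg hgf).d 1 0) p
    rwa [periodicComplex_d_of_odd hfg hgf odd_one]
  | succ n =>
    rw [quasiIsoAt_iff_exactAt' (hL := ChainComplex.exactAt_succ_single_obj ..),
      HomologicalComplex.exactAt_iff' _ (n + 2) (n + 1) n (by simp) (by simp),
      ShortComplex.ShortExact.moduleCat_exact_iff_function_exact]
    exact periodicComplex_exact hfg hgf n

/-- The projective resolution `⋯ → F → F → F → M` given by a surjection `p` with kernel the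
range of `g`, the kernels of `g` and `f` being the ranges of `f` and `g`. -/
def periodicResolution [Module.Projective A F] (hfg : Function.Exact f g)
    (hgf : Function.Exact g f) (hgp : Function.Exact g p) (hp : Function.Surjective p) :
    ProjectiveResolution (ModuleCat.of A M) where
  complex := periodicComplex hfg hgf
  projective _ := inferInstanceAs (Projective (ModuleCat.of A F))
  π := periodicAugmentation hfg hgf hgp
  quasiIso := quasiIso_periodicAugmentation hfg hgf hgp hp

theorem subsingleton_ext_of_periodic [Module.Projective A F] {N : Type u} [AddCommGroup N]
    [Module A N] (hfg : Function.Exact f g) (hgf : Function.Exact g f) (hgp : Function.Exact g p)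
    (hp : Function.Surjective p) (hN : Function.Exact (f.lcomp A N) (g.lcomp A N))
    (hN' : Function.Exact (g.lcomp A N) (f.lcomp A N)) {i : ℕ} (hi : 0 < i) :
    Subsingleton (((Ext A (ModuleCat A) i).obj (Opposite.op (ModuleCat.of A M))).obj
      (ModuleCat.of A N)) := by
  obtain ⟨n, rfl⟩ := Nat.exists_eq_add_one.2 hi
  rw [← ModuleCat.isZero_iff_subsingleton]
  refine Limits.IsZero.of_iso ?_
    ((periodicResolution hfg hgf hgp hp).isoExt (n + 1) (ModuleCat.of A N))
  rw [← HomologicalComplex.exactAt_iff_isZero_homology,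
    HomologicalComplex.exactAt_iff' _ n (n + 1) (n + 2) (by simp) (by simp),
    ShortComplex.moduleCat_exact_iff]
  intro (φ : ModuleCat.of A F ⟶ ModuleCat.of A N) hφ
  replace hφ : (periodicComplex hfg hgf).d (n + 2) (n + 1) ≫ φ = 0 := hφ
  suffices ∃ ψ : ModuleCat.of A F ⟶ ModuleCat.of A N,
      (periodicComplex hfg hgf).d (n + 1) n ≫ ψ = φ from this
  rcases Nat.even_or_odd (n + 1) with hn | hn
  · rw [periodicComplex_d_of_odd hfg hgf hn.add_one] at hφ
    rw [periodicComplex_d_of_even hfg hgf hn]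
    obtain ⟨ψ, hψ⟩ := (hN φ.hom).1 (ModuleCat.hom_ext_iff.1 hφ)
    exact ⟨ModuleCat.ofHom ψ, ModuleCat.hom_ext hψ⟩
  · rw [periodicComplex_d_of_even hfg hgf hn.add_one] at hφ
    rw [periodicComplex_d_of_odd hfg hgf hn]
    obtain ⟨ψ, hψ⟩ := (hN' φ.hom).1 (ModuleCat.hom_ext_iff.1 hφ)
    exact ⟨ModuleCat.ofHom ψ, ModuleCat.hom_ext hψ⟩

end PeriodicResolutions

section TotallyAcyclic

variable {A : Type*} [CommRing A] {F : Type*} [AddCommGroup F] [Module A F] {f g : F →ₗ[A] F}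

/-- The 2-periodic complex `⋯ → F → F → F → ⋯` with differentials alternately `f` and `g` is
*totally acyclic*: it is exact and stays exact after applying `Hom_A(-, A)`. -/
structure IsTotallyAcyclicPair (f g : F →ₗ[A] F) : Prop where
  exact : Function.Exact f g
  exact' : Function.Exact g f
  exact_dualMap : Function.Exact f.dualMap g.dualMap
  exact_dualMap' : Function.Exact g.dualMap f.dualMap

namespace IsTotallyAcyclicPair

/-- The embedding of `coker g` into `F` induced by `f`. -/
def cokerToFree (h : IsTotallyAcyclicPair f g) : F ⧸ LinearMap.range g →ₗ[A] F :=
  (LinearMap.range g).liftQ f h.exact'.linearMap_ker_eq.ge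

lemma cokerToFree_comp_mkQ (h : IsTotallyAcyclicPair f g) :
    h.cokerToFree ∘ₗ (LinearMap.range g).mkQ = f :=
  Submodule.liftQ_mkQ ..

lemma cokerToFree_injective (h : IsTotallyAcyclicPair f g) :
    Function.Injective h.cokerToFree :=
  LinearMap.ker_eq_bot.1 (Submodule.ker_liftQ_eq_bot' _ _ h.exact'.linearMap_ker_eq.symm)

lemma range_cokerToFree (h : IsTotallyAcyclicPair f g) :
    LinearMap.range h.cokerToFree = LinearMap.ker g :=
  (Submodule.range_liftQ ..).trans h.exact.linearMap_ker_eq.symm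

lemma dualMap_cokerToFree_surjective (h : IsTotallyAcyclicPair f g) :
    Function.Surjective h.cokerToFree.dualMap := by
  intro φ
  have hφ : g.dualMap (φ ∘ₗ (LinearMap.range g).mkQ) = 0 := by
    rw [LinearMap.dualMap_apply', LinearMap.comp_assoc, LinearMap.range_mkQ_comp,
      LinearMap.comp_zero]
  obtain ⟨ψ, hψ⟩ := (h.exact_dualMap _).1 hφ
  refine ⟨ψ, Submodule.linearMap_qext _ ?_⟩
  rw [LinearMap.dualMap_apply', LinearMap.comp_assoc, h.cokerToFree_comp_mkQ, ← hψ,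
    LinearMap.dualMap_apply']

lemma exact_dualMap_cokerToFree (h : IsTotallyAcyclicPair f g) :
    Function.Exact g.dualMap h.cokerToFree.dualMap := by
  intro ψ
  have hψ : ψ ∘ₗ f = (ψ ∘ₗ h.cokerToFree) ∘ₗ (LinearMap.range g).mkQ := by
    rw [LinearMap.comp_assoc, h.cokerToFree_comp_mkQ]
  rw [← h.exact_dualMap' ψ, LinearMap.dualMap_apply', LinearMap.dualMap_apply', hψ]
  exact ⟨fun e => by rw [e, LinearMap.zero_comp], fun e => Submodule.linearMap_qext _ e⟩

theorem bijective_dual_eval_coker [Module.IsReflexive A F] (h : IsTotallyAcyclicPair f g) :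
    Function.Bijective (Module.Dual.eval A (F ⧸ LinearMap.range g)) := by
  refine ⟨(injective_iff_map_eq_zero _).2 fun m hm => ?_, fun Ψ => ?_⟩
  · refine h.cokerToFree_injective ((Module.bijective_dual_eval A F).injective ?_)
    ext ψ
    simpa using LinearMap.congr_fun hm (h.cokerToFree.dualMap ψ)
  · obtain ⟨v, hv⟩ := (Module.bijective_dual_eval A F).surjective (Ψ ∘ₗ h.cokerToFree.dualMap)
    replace hv (ψ : Module.Dual A F) : Ψ (h.cokerToFree.dualMap ψ) = ψ v :=
      (LinearMap.congr_fun hv ψ).symm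
    have hgv : g v = 0 := by
      refine (Module.bijective_dual_eval A F).injective (LinearMap.ext fun θ => ?_)
      have := hv (g.dualMap θ)
      rw [h.exact_dualMap_cokerToFree.apply_apply_eq_zero, map_zero] at this
      simpa using this.symm
    obtain ⟨m, rfl⟩ : v ∈ LinearMap.range h.cokerToFree := h.range_cokerToFree ▸ hgv
    refine ⟨m, LinearMap.ext fun φ => ?_⟩
    obtain ⟨ψ, rfl⟩ := h.dualMap_cokerToFree_surjective φ
    exact (hv ψ).symm

lemma dualMap [Module.IsReflexive A F] (h : IsTotallyAcyclicPair f g) :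
    IsTotallyAcyclicPair f.dualMap g.dualMap where
  exact := h.exact_dualMap
  exact' := h.exact_dualMap'
  exact_dualMap := h.exact.of_ladder_linearEquiv_of_exact (e₁ := Module.evalEquiv A F)
    (e₂ := Module.evalEquiv A F) (e₃ := Module.evalEquiv A F) rfl rfl
  exact_dualMap' := h.exact'.of_ladder_linearEquiv_of_exact (e₁ := Module.evalEquiv A F)
    (e₂ := Module.evalEquiv A F) (e₃ := Module.evalEquiv A F) rfl rfl

end IsTotallyAcyclicPair

theorem IsTotallyAcyclicPair.isTotallyReflexive_coker {A : Type u} [CommRing A] {F : Type u}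
    [AddCommGroup F] [Module A F] [Module.Finite A F] [Module.Projective A F] {f g : F →ₗ[A] F}
    (h : IsTotallyAcyclicPair f g) : IsTotallyReflexive A (F ⧸ LinearMap.range g) := by
  refine ⟨inferInstance, fun i hi => ?_, fun i hi => ?_, h.bijective_dual_eval_coker⟩
  · exact subsingleton_ext_of_periodic h.exact h.exact' (LinearMap.exact_map_mkQ_range g)
      (Submodule.mkQ_surjective _) h.exact_dualMap h.exact_dualMap' hi
  · exact subsingleton_ext_of_periodic h.exact_dualMap h.exact_dualMap'
      h.exact_dualMap_cokerToFree h.dualMap_cokerToFree_surjective h.dualMap.exact_dualMap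
      h.dualMap.exact_dualMap' hi

end TotallyAcyclic

section ExactPairs

variable {A : Type*} [CommRing A] {x y : A}

namespace IsExactZeroDivisorPair

lemma symm (h : IsExactZeroDivisorPair x y) : IsExactZeroDivisorPair y x :=
  ⟨h.2.1, h.1, h.2.2.2, h.2.2.1⟩

lemma mul_eq_zero_iff (h : IsExactZeroDivisorPair x y) {t : A} : x * t = 0 ↔ y ∣ t := by
  rw [mul_comm, h.2.2.1, Ideal.mem_span_singleton]

lemma mul_eq_zero (h : IsExactZeroDivisorPair x y) : x * y = 0 :=
  h.mul_eq_zero_iff.2 dvd_rfl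

end IsExactZeroDivisorPair

lemma toLin'_gammaMat_apply (x y a : A) (v : Fin 2 → A) :
    Matrix.toLin' (gammaMat x y a) v = ![x * v 0 + a * v 1, y * v 1] := by
  simp [gammaMat, Matrix.vecHead, Matrix.vecTail]

lemma gammaMat_neg (x y a : A) : gammaMat x y (-a) = etaMat y x a := rfl

lemma etaMat_neg (x y a : A) : etaMat x y (-a) = gammaMat y x a := by
  rw [← gammaMat_neg, neg_neg]

lemma IsExactZeroDivisorPair.exact_etaMat_gammaMat (h : IsExactZeroDivisorPair x y) (a : A) :
    Function.Exact (Matrix.toLin' (etaMat x y a)) (Matrix.toLin' (gammaMat x y a)) := by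
  intro v
  simp only [Set.mem_range, ← gammaMat_neg, toLin'_gammaMat_apply, funext_iff, Fin.forall_fin_two]
  simp only [Matrix.cons_val_zero, Matrix.cons_val_one, Pi.zero_apply]
  constructor
  · rintro ⟨e₀, e₁⟩
    obtain ⟨t, ht⟩ := h.symm.mul_eq_zero_iff.1 e₁
    obtain ⟨s, hs⟩ := h.mul_eq_zero_iff.1
      (show x * (v 0 + a * t) = 0 by rw [← e₀, ht]; ring)
    exact ⟨![s, t], by simp [← hs], ht.symm⟩
  · rintro ⟨w, e₀, e₁⟩
    rw [← e₀, ← e₁]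
    constructor
    · linear_combination w 0 * h.mul_eq_zero
    · linear_combination w 1 * h.mul_eq_zero

/-- The identification of `A²` with its dual for which `v` acts by `w ↦ v₁ w₀ + v₀ w₁`. The swap of
coordinates makes the dual of an upper triangular matrix upper triangular again. -/
def swapDualEquiv (A : Type*) [CommRing A] : (Fin 2 → A) ≃ₗ[A] Module.Dual A (Fin 2 → A) :=
  LinearEquiv.funCongrLeft A A (Equiv.swap 0 1) ≪≫ₗ dotProductEquiv A (Fin 2)

lemma swapDualEquiv_apply (v w : Fin 2 → A) :
    swapDualEquiv A v w = v 1 * w 0 + v 0 * w 1 := by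
  simp [swapDualEquiv, dotProduct, Fin.sum_univ_two]

lemma dualMap_gammaMat_comp_swapDualEquiv (x y a : A) :
    (Matrix.toLin' (gammaMat x y a)).dualMap ∘ₗ (swapDualEquiv A).toLinearMap =
      (swapDualEquiv A).toLinearMap ∘ₗ Matrix.toLin' (gammaMat y x a) := by
  refine LinearMap.ext fun v => LinearMap.ext fun w => ?_
  simp only [LinearMap.comp_apply, LinearEquiv.coe_coe, LinearMap.dualMap_apply,
    swapDualEquiv_apply, toLin'_gammaMat_apply, Matrix.cons_val_zero, Matrix.cons_val_one]
  ring

theorem IsExactZeroDivisorPair.isTotallyAcyclicPair (h : IsExactZeroDivisorPair x y) (a : A) :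
    IsTotallyAcyclicPair (Matrix.toLin' (etaMat x y a)) (Matrix.toLin' (gammaMat x y a)) where
  exact := h.exact_etaMat_gammaMat a
  exact' := by simpa only [etaMat_neg, gammaMat_neg] using h.symm.exact_etaMat_gammaMat (-a)
  exact_dualMap := (h.symm.exact_etaMat_gammaMat a).of_ladder_linearEquiv_of_exact
    (dualMap_gammaMat_comp_swapDualEquiv y x (-a)) (dualMap_gammaMat_comp_swapDualEquiv x y a)
  exact_dualMap' := by
    refine Function.Exact.of_ladder_linearEquiv_of_exact
      (dualMap_gammaMat_comp_swapDualEquiv x y a) (dualMap_gammaMat_comp_swapDualEquiv y x (-a)) ?_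
    simpa only [etaMat_neg, gammaMat_neg] using h.exact_etaMat_gammaMat (-a)

end ExactPairs

namespace IsExactZeroDivisorPair

variable {A : Type u} [CommRing A] {x y : A}

theorem isTotallyReflexive_gmod (h : IsExactZeroDivisorPair x y) (a : A) :
    IsTotallyReflexive A (Gmod x y a) :=
  (h.isTotallyAcyclicPair a).isTotallyReflexive_coker

theorem isTotallyReflexive_hmod (h : IsExactZeroDivisorPair x y) (a : A) :
    IsTotallyReflexive A (Hmod x y a) :=
  h.symm.isTotallyReflexive_gmod (-a)

end IsExactZeroDivisorPair

section HomBetweenIdeals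

open scoped nonZeroDivisors

variable {A : Type*} [CommRing A] {I J : Ideal A}

lemma coe_mul_map_comm (φ : I →ₗ[A] J) (i j : I) : (i : A) * φ j = j * φ i := by
  have h : (i : A) • φ j = (j : A) • φ i := by
    rw [← map_smul, ← map_smul]
    exact congrArg φ (Subtype.ext (mul_comm _ _))
  exact congrArg Subtype.val h

/-- Evaluation `φ ↦ φ i` of homomorphisms `I → J` between ideals. When `i` is a nonzerodivisor it
identifies `Hom_A(I, J)` with an ideal of `A`. -/
def evalAt (i : I) (J : Ideal A) : (I →ₗ[A] J) →ₗ[A] A :=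
  J.subtype ∘ₗ LinearMap.applyₗ i

lemma evalAt_apply (i : I) (φ : I →ₗ[A] J) : evalAt i J φ = φ i := rfl

lemma evalAt_injective {i : I} (hi : (i : A) ∈ A⁰) : Function.Injective (evalAt i J) := by
  intro φ ψ h
  ext j
  rw [← mul_cancel_left_mem_nonZeroDivisors hi, coe_mul_map_comm φ, coe_mul_map_comm ψ]
  exact congrArg _ h

lemma mul_mem_range_evalAt_mul_range_evalAt (e : I ≃ₗ[A] J) (i : I) (j : J) :
    (i * j : A) ∈ LinearMap.range (evalAt i J) * LinearMap.range (evalAt j I) := by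
  have h := coe_mul_map_comm (e : I →ₗ[A] J) i (e.symm j)
  rw [LinearEquiv.coe_coe, e.apply_symm_apply, mul_comm (e.symm j : A)] at h
  rw [h]
  exact Ideal.mul_mem_mul ⟨e, rfl⟩ ⟨e.symm, rfl⟩

lemma span_singleton_mul_eq_map_mulLeft (c : A) (K : Ideal A) :
    Ideal.span {c} * K = Submodule.map (LinearMap.mulLeft A c) K :=
  Submodule.ext fun _ => Ideal.mem_span_singleton_mul

/-- Multiplication by a nonzerodivisor `c` as an isomorphism `K ≃ cK`. -/
def equivSpanSingletonMul {c : A} (hc : c ∈ A⁰) (K : Ideal A) :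
    K ≃ₗ[A] (Ideal.span {c} * K : Ideal A) :=
  Submodule.equivMapOfInjective (LinearMap.mulLeft A c)
      (isRegular_iff_mem_nonZeroDivisors.2 hc).left K ≪≫ₗ
    LinearEquiv.ofEq _ _ (span_singleton_mul_eq_map_mulLeft c K).symm

lemma coe_equivSpanSingletonMul {c : A} (hc : c ∈ A⁰) (K : Ideal A) (k : K) :
    (equivSpanSingletonMul hc K k : A) = c * k := rfl

theorem range_evalAt {i : I} (hi : (i : A) ∈ A⁰) :
    LinearMap.range (evalAt i J) = (Ideal.span {(i : A)} * J).colon I := by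
  ext z
  rw [LinearMap.mem_range, Submodule.mem_colon]
  constructor
  · rintro ⟨φ, rfl⟩ j hj
    refine Ideal.mem_span_singleton_mul.2 ⟨φ ⟨j, hj⟩, (φ _).2, ?_⟩
    rw [coe_mul_map_comm φ i ⟨j, hj⟩, evalAt_apply, smul_eq_mul, mul_comm]
  · intro (hz : ∀ j ∈ I, LinearMap.mulLeft A z j ∈ Ideal.span {(i : A)} * J)
    let φ : I →ₗ[A] J := (equivSpanSingletonMul hi J).symm ∘ₗ (LinearMap.mulLeft A z).restrict hz
    have hφ : equivSpanSingletonMul hi J (φ i) = (LinearMap.mulLeft A z).restrict hz i :=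
      LinearEquiv.apply_symm_apply ..
    refine ⟨φ, (mul_cancel_left_mem_nonZeroDivisors hi).1 ?_⟩
    rw [evalAt_apply, ← coe_equivSpanSingletonMul hi, hφ, LinearMap.coe_restrict_apply,
      LinearMap.mulLeft_apply, mul_comm]

lemma mem_span_pair_right (u a : A) : a ∈ Ideal.span {u, a} :=
  Ideal.subset_span (by simp)

lemma span_singleton_mul_colon_span_pair {a : A} (ha : a ∈ A⁰) (u : A) (J : Ideal A) :
    (Ideal.span {a} * J).colon (Ideal.span {u, a}) = J ⊓ (Ideal.span {a} * J).colon {u} := by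
  rw [Ideal.colon_span, Set.insert_eq, Submodule.colon_union, inf_comm]
  congr 1
  ext z
  rw [Submodule.mem_colon_singleton, smul_eq_mul, mul_comm z, Ideal.mem_span_singleton_mul]
  simp [mul_cancel_left_mem_nonZeroDivisors ha]

theorem range_evalAt_span_pair {a : A} (ha : a ∈ A⁰) (u : A) (J : Ideal A) :
    LinearMap.range (evalAt (⟨a, mem_span_pair_right u a⟩ : Ideal.span {u, a}) J) =
      J ⊓ (Ideal.span {a} * J).colon {u} :=
  (range_evalAt ha).trans (span_singleton_mul_colon_span_pair ha u J)

/-- `Hom_A(I, J)` as the ideal of values at a nonzerodivisor `i` of `I`. -/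
def homEquivOfRangeEq {i : I} (hi : (i : A) ∈ A⁰) {K : Ideal A}
    (hK : LinearMap.range (evalAt i J) = K) : (I →ₗ[A] J) ≃ₗ[A] K :=
  LinearEquiv.ofInjective _ (evalAt_injective hi) ≪≫ₗ LinearEquiv.ofEq _ _ hK

lemma exists_eq_smul_id_of_range_evalAt_le {i : I} (hi : (i : A) ∈ A⁰)
    (h : LinearMap.range (evalAt i I) ≤ Ideal.span {(i : A)}) (φ : I →ₗ[A] I) :
    ∃ r : A, φ = r • LinearMap.id := by
  obtain ⟨r, hr⟩ := Ideal.mem_span_singleton'.1 (h ⟨φ, rfl⟩)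
  exact ⟨r, evalAt_injective hi hr.symm⟩

end HomBetweenIdeals

section RegularPairs

open scoped nonZeroDivisors

variable {A : Type*} [CommRing A] {x y : A}

namespace IsExactZeroDivisorPair

lemma dvd_of_dvd_mul (h : IsExactZeroDivisorPair x y) {a t : A} (ha : a ∈ A⁰) (hat : y ∣ a * t) :
    y ∣ t := by
  rw [← h.mul_eq_zero_iff] at hat ⊢
  rwa [← mul_left_mem_nonZeroDivisors_eq_zero_iff ha, mul_left_comm]

lemma exact_toLin'_gammaMat (h : IsExactZeroDivisorPair x y) {a : A} (ha : a ∈ A⁰) :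
    Function.Exact (Matrix.toLin' (gammaMat x y a)) (Fintype.linearCombination A ![y, -a]) := by
  intro v
  simp only [Set.mem_range, toLin'_gammaMat_apply, funext_iff, Fin.forall_fin_two,
    Fintype.linearCombination_apply, Fin.sum_univ_two, Matrix.cons_val_zero, Matrix.cons_val_one,
    smul_eq_mul]
  constructor
  · intro e
    obtain ⟨q, hq⟩ := h.dvd_of_dvd_mul ha (t := v 1) ⟨v 0, by linear_combination -e⟩
    obtain ⟨r, hr⟩ := h.symm.mul_eq_zero_iff.1
      (show y * (v 0 - a * q) = 0 by rw [hq] at e; linear_combination e)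
    exact ⟨![r, q], by simp [← hr], hq.symm⟩
  · rintro ⟨w, e₀, e₁⟩
    rw [← e₀, ← e₁]
    linear_combination w 0 * h.mul_eq_zero

/-- `G_a` as the ideal `(y, a)`, for a nonzerodivisor `a`. -/
def gmodEquiv (h : IsExactZeroDivisorPair x y) {a : A} (ha : a ∈ A⁰) :
    Gmod x y a ≃ₗ[A] Ideal.span {y, a} :=
  Submodule.quotEquivOfEq _ _ (h.exact_toLin'_gammaMat ha).linearMap_ker_eq.symm ≪≫ₗ
    LinearMap.quotKerEquivRange _ ≪≫ₗ
    LinearEquiv.ofEq _ _ (by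
      rw [Fintype.range_linearCombination, Matrix.range_cons_cons_empty]
      exact Ideal.span_pair_neg y a)

/-- `H_a` as the ideal `(x, a)`, for a nonzerodivisor `a`. -/
def hmodEquiv (h : IsExactZeroDivisorPair x y) {a : A} (ha : a ∈ A⁰) :
    Hmod x y a ≃ₗ[A] Ideal.span {x, a} :=
  h.symm.gmodEquiv (a := -a) (by simpa [mem_nonZeroDivisors_iff] using ha) ≪≫ₗ
    LinearEquiv.ofEq _ _ (Ideal.span_pair_neg x a)

end IsExactZeroDivisorPair

/-- A *regular* exact pair of zero divisors: an exact pair with `(x) ∩ (y) = 0`. -/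
structure IsRegularExactPair (x y : A) : Prop where
  isExactPair : IsExactZeroDivisorPair x y
  inf_eq_bot : Ideal.span {x} ⊓ Ideal.span {y} = ⊥

lemma mem_span_singleton_mul_colon_singleton {a u z : A} {K : Ideal A} :
    z ∈ (Ideal.span {a} * K).colon {u} ↔ ∃ k ∈ K, a * k = u * z := by
  rw [Submodule.mem_colon_singleton, smul_eq_mul, mul_comm z, Ideal.mem_span_singleton_mul]

namespace IsRegularExactPair

lemma symm (h : IsRegularExactPair x y) : IsRegularExactPair y x :=
  ⟨h.isExactPair.symm, inf_comm (Ideal.span {x}) _ ▸ h.inf_eq_bot⟩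

lemma eq_zero_of_dvd_of_dvd (h : IsRegularExactPair x y) {t : A} (hx : x ∣ t) (hy : y ∣ t) :
    t = 0 := by
  rw [← Ideal.mem_bot, ← h.inf_eq_bot]
  exact ⟨Ideal.mem_span_singleton.2 hx, Ideal.mem_span_singleton.2 hy⟩

end IsRegularExactPair

lemma exists_add_eq_of_isSMulRegular {a : A} (ha : IsSMulRegular (A ⧸ Ideal.span {x, y}) a)
    {t p q : A} (e : p * x + q * y = a * t) : ∃ p q, p * x + q * y = t :=
  Ideal.mem_span_pair.1 <| (isSMulRegular_quotient_iff_mem_of_smul_mem _ a).1 ha t <|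
    Ideal.mem_span_pair.2 ⟨p, q, e⟩

namespace IsRegularExactPair

theorem span_mul_span_pair_colon_left (h : IsRegularExactPair x y) {a c : A}
    (hac : IsSMulRegular (A ⧸ Ideal.span {x, y}) (a * c)) :
    (Ideal.span {a} * Ideal.span {y, c}).colon {x} = Ideal.span {y, a * c} := by
  ext z
  simp only [mem_span_singleton_mul_colon_singleton, Ideal.mem_span_pair]
  constructor
  · rintro ⟨_, ⟨p, q, rfl⟩, e⟩
    obtain ⟨q₁, q₂, hq⟩ := exists_add_eq_of_isSMulRegular hac (t := q) (p := z) (q := -(a * p))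
      (by linear_combination -e)
    have hz : x * (z - a * c * q₁) = 0 := h.eq_zero_of_dvd_of_dvd ⟨_, rfl⟩
      ⟨a * p + a * c * q₂, by rw [← hq] at e; linear_combination -e⟩
    obtain ⟨t, ht⟩ := h.isExactPair.mul_eq_zero_iff.1 hz
    exact ⟨t, q₁, by linear_combination -ht⟩
  · rintro ⟨p, q, rfl⟩
    exact ⟨x * q * c, ⟨0, x * q, by ring⟩, by linear_combination -p * h.isExactPair.mul_eq_zero⟩

end IsRegularExactPair

theorem IsExactZeroDivisorPair.span_mul_span_pair_colon_right (h : IsExactZeroDivisorPair x y)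
    {a c : A} (hac : a * c ∈ A⁰) :
    (Ideal.span {a} * Ideal.span {y, c}).colon {y} = Ideal.span {x, a} := by
  ext z
  simp only [mem_span_singleton_mul_colon_singleton, Ideal.mem_span_pair]
  constructor
  · rintro ⟨_, ⟨p, q, rfl⟩, e⟩
    obtain ⟨q, rfl⟩ := h.dvd_of_dvd_mul hac (t := q) ⟨z - a * p, by linear_combination e⟩
    obtain ⟨t, ht⟩ := h.symm.mul_eq_zero_iff.1
      (show y * (z - a * (p + q * c)) = 0 by linear_combination -e)
    exact ⟨t, p + q * c, by linear_combination -ht⟩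
  · rintro ⟨p, q, rfl⟩
    exact ⟨y * q, ⟨q, 0, by ring⟩, by linear_combination -p * h.mul_eq_zero⟩

namespace IsRegularExactPair

theorem span_pair_inf_span_pair (h : IsRegularExactPair x y) {a : A}
    (ha : IsSMulRegular (A ⧸ Ideal.span {x, y}) a) (d : A) :
    Ideal.span {y, a} ⊓ Ideal.span {x, a * d} = Ideal.span {a} * Ideal.span {x, d} := by
  ext z
  simp only [Ideal.mem_inf, Ideal.mem_span_singleton_mul, Ideal.mem_span_pair]
  constructor
  · rintro ⟨⟨s, t, rfl⟩, p, q, e⟩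
    obtain ⟨u, v, htq⟩ := exists_add_eq_of_isSMulRegular ha (t := t - q * d) (p := p) (q := -s)
      (by linear_combination e)
    obtain rfl : t = u * x + v * y + q * d := by linear_combination -htq
    have hy : (s + a * v) * y = 0 := h.eq_zero_of_dvd_of_dvd
      ⟨p - a * u, by linear_combination -e⟩ ⟨_, mul_comm ..⟩
    exact ⟨_, ⟨u, q, rfl⟩, by linear_combination -hy⟩
  · rintro ⟨_, ⟨p, q, rfl⟩, rfl⟩
    exact ⟨⟨0, p * x + q * d, by ring⟩, a * p, q, by ring⟩

end IsRegularExactPair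

end RegularPairs

section HomGH

open scoped nonZeroDivisors

variable {A : Type*} [CommRing A] {x y a c d : A}

namespace IsRegularExactPair

theorem range_evalAt_swap (h : IsRegularExactPair x y) (ha : a ∈ A⁰)
    (hac : IsSMulRegular (A ⧸ Ideal.span {x, y}) (a * c)) :
    LinearMap.range (evalAt (⟨a, mem_span_pair_right x a⟩ : Ideal.span {x, a})
      (Ideal.span {y, c})) = Ideal.span {y, a * c} := by
  rw [range_evalAt_span_pair ha, h.span_mul_span_pair_colon_left hac, inf_eq_right,
    Ideal.span_le, Set.pair_subset_iff]
  exact ⟨Ideal.subset_span (Set.mem_insert ..), Ideal.mul_mem_left _ _ (mem_span_pair_right y c)⟩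

theorem range_evalAt_mul (h : IsRegularExactPair x y) (ha : a ∈ A⁰) (hd : d ∈ A⁰)
    (ha' : IsSMulRegular (A ⧸ Ideal.span {x, y}) a) :
    LinearMap.range (evalAt (⟨a, mem_span_pair_right y a⟩ : Ideal.span {y, a})
      (Ideal.span {y, a * d})) = Ideal.span {a} * Ideal.span {y, d} := by
  rw [range_evalAt_span_pair ha,
    h.isExactPair.span_mul_span_pair_colon_right (mul_mem ha (mul_mem ha hd)), inf_comm,
    h.symm.span_pair_inf_span_pair (Set.pair_comm x y ▸ ha')]

theorem range_evalAt_of_mul (h : IsRegularExactPair x y) (ha : a ∈ A⁰) (hd : d ∈ A⁰)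
    (ha' : IsSMulRegular (A ⧸ Ideal.span {x, y}) a) :
    LinearMap.range (evalAt (⟨a * d, mem_span_pair_right y _⟩ : Ideal.span {y, a * d})
      (Ideal.span {y, a})) = Ideal.span {a} * Ideal.span {x, d} := by
  rw [range_evalAt_span_pair (mul_mem ha hd),
    h.isExactPair.span_mul_span_pair_colon_right (mul_mem (mul_mem ha hd) ha),
    h.span_pair_inf_span_pair ha']

theorem nonempty_hom_hmod_gmod_equiv (h : IsRegularExactPair x y) (ha : a ∈ A⁰) (hc : c ∈ A⁰)
    (hac : IsSMulRegular (A ⧸ Ideal.span {x, y}) (a * c)) :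
    Nonempty ((Hmod x y a →ₗ[A] Gmod x y c) ≃ₗ[A] Gmod x y (a * c)) :=
  ⟨(h.isExactPair.hmodEquiv ha).arrowCongr (h.isExactPair.gmodEquiv hc) ≪≫ₗ
    homEquivOfRangeEq ha (h.range_evalAt_swap ha hac) ≪≫ₗ
    (h.isExactPair.gmodEquiv (mul_mem ha hc)).symm⟩

theorem nonempty_hom_gmod_hmod_equiv (h : IsRegularExactPair x y) (ha : a ∈ A⁰) (hc : c ∈ A⁰)
    (hac : IsSMulRegular (A ⧸ Ideal.span {x, y}) (a * c)) :
    Nonempty ((Gmod x y a →ₗ[A] Hmod x y c) ≃ₗ[A] Hmod x y (a * c)) :=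
  ⟨(h.isExactPair.gmodEquiv ha).arrowCongr (h.isExactPair.hmodEquiv hc) ≪≫ₗ
    homEquivOfRangeEq ha (h.symm.range_evalAt_swap ha (Set.pair_comm x y ▸ hac)) ≪≫ₗ
    (h.isExactPair.hmodEquiv (mul_mem ha hc)).symm⟩

theorem nonempty_hom_gmod_gmod_mul_equiv (h : IsRegularExactPair x y) (ha : a ∈ A⁰) (hd : d ∈ A⁰)
    (ha' : IsSMulRegular (A ⧸ Ideal.span {x, y}) a) :
    Nonempty ((Gmod x y a →ₗ[A] Gmod x y (a * d)) ≃ₗ[A] Gmod x y d) :=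
  ⟨(h.isExactPair.gmodEquiv ha).arrowCongr (h.isExactPair.gmodEquiv (mul_mem ha hd)) ≪≫ₗ
    homEquivOfRangeEq ha (h.range_evalAt_mul ha hd ha') ≪≫ₗ (equivSpanSingletonMul ha _).symm ≪≫ₗ
    (h.isExactPair.gmodEquiv hd).symm⟩

theorem nonempty_hom_gmod_mul_gmod_equiv (h : IsRegularExactPair x y) (ha : a ∈ A⁰) (hd : d ∈ A⁰)
    (ha' : IsSMulRegular (A ⧸ Ideal.span {x, y}) a) :
    Nonempty ((Gmod x y (a * d) →ₗ[A] Gmod x y a) ≃ₗ[A] Hmod x y d) :=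
  ⟨(h.isExactPair.gmodEquiv (mul_mem ha hd)).arrowCongr (h.isExactPair.gmodEquiv ha) ≪≫ₗ
    homEquivOfRangeEq (mul_mem ha hd) (h.range_evalAt_of_mul ha hd ha') ≪≫ₗ
    (equivSpanSingletonMul ha _).symm ≪≫ₗ (h.isExactPair.hmodEquiv hd).symm⟩

theorem nonempty_hom_hmod_hmod_mul_equiv (h : IsRegularExactPair x y) (ha : a ∈ A⁰) (hd : d ∈ A⁰)
    (ha' : IsSMulRegular (A ⧸ Ideal.span {x, y}) a) :
    Nonempty ((Hmod x y a →ₗ[A] Hmod x y (a * d)) ≃ₗ[A] Hmod x y d) :=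
  ⟨(h.isExactPair.hmodEquiv ha).arrowCongr (h.isExactPair.hmodEquiv (mul_mem ha hd)) ≪≫ₗ
    homEquivOfRangeEq ha (h.symm.range_evalAt_mul ha hd (Set.pair_comm x y ▸ ha')) ≪≫ₗ
    (equivSpanSingletonMul ha _).symm ≪≫ₗ (h.isExactPair.hmodEquiv hd).symm⟩

theorem nonempty_hom_hmod_mul_hmod_equiv (h : IsRegularExactPair x y) (ha : a ∈ A⁰) (hd : d ∈ A⁰)
    (ha' : IsSMulRegular (A ⧸ Ideal.span {x, y}) a) :
    Nonempty ((Hmod x y (a * d) →ₗ[A] Hmod x y a) ≃ₗ[A] Gmod x y d) :=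
  ⟨(h.isExactPair.hmodEquiv (mul_mem ha hd)).arrowCongr (h.isExactPair.hmodEquiv ha) ≪≫ₗ
    homEquivOfRangeEq (mul_mem ha hd)
      (h.symm.range_evalAt_of_mul ha hd (Set.pair_comm x y ▸ ha')) ≪≫ₗ
    (equivSpanSingletonMul ha _).symm ≪≫ₗ (h.isExactPair.gmodEquiv hd).symm⟩

theorem nonempty_hom_gmod_gmod_mul_equiv_hom_hmod (h : IsRegularExactPair x y) (ha : a ∈ A⁰)
    (hd : d ∈ A⁰) (ha' : IsSMulRegular (A ⧸ Ideal.span {x, y}) a) :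
    Nonempty ((Gmod x y a →ₗ[A] Gmod x y (a * d)) ≃ₗ[A]
      (Hmod x y (a * d) →ₗ[A] Hmod x y a)) :=
  (h.nonempty_hom_gmod_gmod_mul_equiv ha hd ha').map2 (fun e e' => e ≪≫ₗ e'.symm)
    (h.nonempty_hom_hmod_mul_hmod_equiv ha hd ha')

theorem nonempty_hom_gmod_mul_gmod_equiv_hom_hmod (h : IsRegularExactPair x y) (ha : a ∈ A⁰)
    (hd : d ∈ A⁰) (ha' : IsSMulRegular (A ⧸ Ideal.span {x, y}) a) :
    Nonempty ((Gmod x y (a * d) →ₗ[A] Gmod x y a) ≃ₗ[A]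
      (Hmod x y a →ₗ[A] Hmod x y (a * d))) :=
  (h.nonempty_hom_gmod_mul_gmod_equiv ha hd ha').map2 (fun e e' => e ≪≫ₗ e'.symm)
    (h.nonempty_hom_hmod_hmod_mul_equiv ha hd ha')

end IsRegularExactPair

end HomGH

section Indecomposable

variable {A : Type*} [CommRing A] {M N : Type*} [AddCommGroup M] [Module A M] [AddCommGroup N]
  [Module A N]

lemma IsIndecomposableModule.of_linearEquiv (hM : IsIndecomposableModule A M) (e : M ≃ₗ[A] N) :
    IsIndecomposableModule A N := by
  obtain ⟨⟨m, hm⟩, h⟩ := hM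
  refine ⟨⟨e m, e.map_ne_zero_iff.2 hm⟩, fun P Q hPQ => ?_⟩
  exact (h _ _ ((Submodule.orderIsoMapComap e).symm.isCompl hPQ)).imp
    (map_eq_bot_iff _).1 (map_eq_bot_iff _).1

theorem isIndecomposableModule_of_forall_end [IsLocalRing A] [Nontrivial M]
    (h : ∀ φ : M →ₗ[A] M, ∃ r : A, φ = r • LinearMap.id) : IsIndecomposableModule A M := by
  refine ⟨exists_ne 0, fun P Q hPQ => ?_⟩
  obtain ⟨r, hr⟩ := h (P.projection Q hPQ)
  replace hr (m : M) : P.projection Q hPQ m = r • m := LinearMap.congr_fun hr m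
  rcases IsLocalRing.isUnit_or_isUnit_one_sub_self r with hu | hu
  · refine .inr ((Submodule.eq_bot_iff Q).2 fun m hm => (hu.smul_eq_zero).1 ?_)
    rw [← hr, Submodule.projection_apply_of_mem_right _ hm]
  · refine .inl ((Submodule.eq_bot_iff P).2 fun m hm => (hu.smul_eq_zero).1 ?_)
    rw [sub_smul, one_smul, ← hr, Submodule.projection_apply_of_mem_left _ hm, sub_self]

end Indecomposable

lemma nonempty_linearEquiv_of_free {A : Type*} [CommRing A] {I : Ideal A} [Module.Free A I]
    [Module.Finite A I] (hI : I ≠ ⊥) : Nonempty (I ≃ₗ[A] A) := by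
  have : Nontrivial I := Submodule.nontrivial_iff_ne_bot.2 hI
  have : Nontrivial A := Module.nontrivial A I
  refine (Module.nonempty_linearEquiv_of_finrank_eq_one ?_).map LinearEquiv.symm
  exact le_antisymm ((Submodule.finrank_le I).trans_eq (Module.finrank_self A))
    ((Module.finrank_pos_iff_of_free A I).2 ‹_›)

section LocalRing

open scoped nonZeroDivisors

variable {A : Type*} [CommRing A] [IsLocalRing A] {x y a c d : A}

lemma notMem_span_pair_mul_span_pair (hxy : x * y = 0) (hx : ¬ IsUnit x) (hy : ¬ IsUnit y)
    (hd : ¬ IsUnit d) (hd₀ : d ≠ 0) : d ∉ Ideal.span {x, d} * Ideal.span {y, d} := by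
  intro h
  have hle : Ideal.span {x, d} * Ideal.span {y, d} ≤
      Ideal.span {d} * IsLocalRing.maximalIdeal A := by
    rw [Ideal.span_pair_mul_span_pair, Ideal.span_le]
    simp only [Set.insert_subset_iff, Set.singleton_subset_iff, SetLike.mem_coe,
      Ideal.mem_span_singleton_mul, IsLocalRing.mem_maximalIdeal, mem_nonunits_iff]
    exact ⟨⟨0, not_isUnit_zero, by rw [hxy, mul_zero]⟩, ⟨x, hx, mul_comm ..⟩, ⟨y, hy, rfl⟩,
      ⟨d, hd, rfl⟩⟩
  obtain ⟨m, hm, hdm⟩ := Ideal.mem_span_singleton_mul.1 (hle h)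
  have hu : IsUnit (1 - m) := (IsLocalRing.isUnit_or_isUnit_one_sub_self m).resolve_left hm
  exact hd₀ (hu.mul_left_eq_zero.1 (by linear_combination -hdm))

namespace IsRegularExactPair

theorem isEmpty_span_pair_equiv_span_pair_mul (h : IsRegularExactPair x y) (ha : a ∈ A⁰)
    (hd : d ∈ A⁰) (ha' : IsSMulRegular (A ⧸ Ideal.span {x, y}) a) (hdu : ¬ IsUnit d) :
    IsEmpty (Ideal.span {y, a} ≃ₗ[A] Ideal.span {y, a * d}) := by
  refine ⟨fun e => ?_⟩
  have hmem := mul_mem_range_evalAt_mul_range_evalAt e ⟨a, mem_span_pair_right y a⟩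
    ⟨a * d, mem_span_pair_right y _⟩
  rw [h.range_evalAt_mul ha hd ha', h.range_evalAt_of_mul ha hd ha', mul_mul_mul_comm,
    Ideal.span_singleton_mul_span_singleton, Ideal.mem_span_singleton_mul] at hmem
  obtain ⟨z, hz, hzd⟩ := hmem
  rw [← mul_assoc, mul_cancel_left_mem_nonZeroDivisors (mul_mem ha ha)] at hzd
  exact notMem_span_pair_mul_span_pair h.symm.isExactPair.mul_eq_zero h.isExactPair.2.1
    h.isExactPair.1 hdu (nonZeroDivisors.ne_zero hd) (hzd ▸ hz)

theorem isEmpty_span_pair_equiv_swap (h : IsRegularExactPair x y) (ha : a ∈ A⁰) (hc : c ∈ A⁰)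
    (hac : IsSMulRegular (A ⧸ Ideal.span {x, y}) (a * c)) (hu : ¬ IsUnit (a * c)) :
    IsEmpty (Ideal.span {x, a} ≃ₗ[A] Ideal.span {y, c}) := by
  refine ⟨fun e => ?_⟩
  have hmem := mul_mem_range_evalAt_mul_range_evalAt e ⟨a, mem_span_pair_right x a⟩
    ⟨c, mem_span_pair_right y c⟩
  rw [h.range_evalAt_swap ha hac,
    h.symm.range_evalAt_swap hc (mul_comm a c ▸ Set.pair_comm x y ▸ hac), mul_comm c a] at hmem
  exact notMem_span_pair_mul_span_pair h.symm.isExactPair.mul_eq_zero h.isExactPair.2.1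
    h.isExactPair.1 hu (nonZeroDivisors.ne_zero (mul_mem ha hc)) hmem

theorem not_free_span_pair (h : IsRegularExactPair x y) (ha : a ∈ A⁰) (hu : ¬ IsUnit a) :
    ¬ Module.Free A (Ideal.span {y, a}) := by
  intro hfree
  have hfin : Module.Finite A (Ideal.span {y, a}) :=
    Module.Finite.span_of_finite A (Set.toFinite _)
  obtain ⟨e⟩ := nonempty_linearEquiv_of_free
    (Submodule.ne_bot_iff _ |>.2 ⟨a, mem_span_pair_right y a, nonZeroDivisors.ne_zero ha⟩)
  have htop : Ideal.span {y, 1} = ⊤ := (Ideal.eq_top_iff_one _).2 (mem_span_pair_right y 1)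
  have hempty := h.isEmpty_span_pair_equiv_span_pair_mul (one_mem _) ha (.one _) hu
  rw [htop, one_mul] at hempty
  exact hempty.false (Submodule.topEquiv ≪≫ₗ e.symm)

theorem isIndecomposableModule_span_pair (h : IsRegularExactPair x y) (ha : a ∈ A⁰)
    (ha' : IsSMulRegular (A ⧸ Ideal.span {x, y}) a) :
    IsIndecomposableModule A (Ideal.span {y, a}) := by
  have : Nontrivial (Ideal.span {y, a}) := Submodule.nontrivial_iff_ne_bot.2
    (Submodule.ne_bot_iff _ |>.2 ⟨a, mem_span_pair_right y a, nonZeroDivisors.ne_zero ha⟩)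
  refine isIndecomposableModule_of_forall_end
    (exists_eq_smul_id_of_range_evalAt_le (i := ⟨a, mem_span_pair_right y a⟩) ha ?_)
  have hrange := h.range_evalAt_mul ha (one_mem _) ha'
  rw [mul_one] at hrange
  exact hrange.trans_le Ideal.mul_le_left

theorem isEmpty_gmod_equiv_gmod_mul (h : IsRegularExactPair x y) (ha : a ∈ A⁰) (hd : d ∈ A⁰)
    (ha' : IsSMulRegular (A ⧸ Ideal.span {x, y}) a) (hdu : ¬ IsUnit d) :
    IsEmpty (Gmod x y a ≃ₗ[A] Gmod x y (a * d)) :=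
  ⟨fun e => (h.isEmpty_span_pair_equiv_span_pair_mul ha hd ha' hdu).false
    ((h.isExactPair.gmodEquiv ha).symm ≪≫ₗ e ≪≫ₗ h.isExactPair.gmodEquiv (mul_mem ha hd))⟩

theorem isEmpty_hmod_equiv_hmod_mul (h : IsRegularExactPair x y) (ha : a ∈ A⁰) (hd : d ∈ A⁰)
    (ha' : IsSMulRegular (A ⧸ Ideal.span {x, y}) a) (hdu : ¬ IsUnit d) :
    IsEmpty (Hmod x y a ≃ₗ[A] Hmod x y (a * d)) :=
  ⟨fun e => (h.symm.isEmpty_span_pair_equiv_span_pair_mul ha hd (Set.pair_comm x y ▸ ha')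
    hdu).false
    ((h.isExactPair.hmodEquiv ha).symm ≪≫ₗ e ≪≫ₗ h.isExactPair.hmodEquiv (mul_mem ha hd))⟩

theorem isEmpty_gmod_equiv_hmod (h : IsRegularExactPair x y) (ha : a ∈ A⁰) (hc : c ∈ A⁰)
    (hac : IsSMulRegular (A ⧸ Ideal.span {x, y}) (a * c)) (hu : ¬ IsUnit (a * c)) :
    IsEmpty (Gmod x y a ≃ₗ[A] Hmod x y c) :=
  ⟨fun e => (h.symm.isEmpty_span_pair_equiv_swap ha hc (Set.pair_comm x y ▸ hac) hu).false
    ((h.isExactPair.gmodEquiv ha).symm ≪≫ₗ e ≪≫ₗ h.isExactPair.hmodEquiv hc)⟩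

theorem not_free_gmod (h : IsRegularExactPair x y) (ha : a ∈ A⁰) (hu : ¬ IsUnit a) :
    ¬ Module.Free A (Gmod x y a) :=
  fun _ => h.not_free_span_pair ha hu (.of_equiv (h.isExactPair.gmodEquiv ha))

theorem not_free_hmod (h : IsRegularExactPair x y) (ha : a ∈ A⁰) (hu : ¬ IsUnit a) :
    ¬ Module.Free A (Hmod x y a) :=
  fun _ => h.symm.not_free_span_pair ha hu (.of_equiv (h.isExactPair.hmodEquiv ha))

theorem isIndecomposableModule_gmod (h : IsRegularExactPair x y) (ha : a ∈ A⁰)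
    (ha' : IsSMulRegular (A ⧸ Ideal.span {x, y}) a) : IsIndecomposableModule A (Gmod x y a) :=
  (h.isIndecomposableModule_span_pair ha ha').of_linearEquiv (h.isExactPair.gmodEquiv ha).symm

theorem isIndecomposableModule_hmod (h : IsRegularExactPair x y) (ha : a ∈ A⁰)
    (ha' : IsSMulRegular (A ⧸ Ideal.span {x, y}) a) : IsIndecomposableModule A (Hmod x y a) :=
  (h.symm.isIndecomposableModule_span_pair ha (Set.pair_comm x y ▸ ha')).of_linearEquiv
    (h.isExactPair.hmodEquiv ha).symm

end IsRegularExactPair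

end LocalRing

section NoetherianLocalRing

open scoped nonZeroDivisors

variable {A : Type*} [CommRing A] [IsNoetherianRing A] [IsLocalRing A] {x y a t : A}

namespace IsRegularExactPair

lemma dvd_of_dvd_mul_of_isSMulRegular (h : IsRegularExactPair x y)
    (ha : IsSMulRegular (A ⧸ Ideal.span {x, y}) a) (hat : y ∣ a * t) : y ∣ t := by
  let N : Ideal A := (Ideal.span {y}).colon {a}
  have mem_N (s : A) : s ∈ N ↔ y ∣ a * s := by
    rw [Submodule.mem_colon_singleton, smul_eq_mul, mul_comm, Ideal.mem_span_singleton]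
  have hN : N ≤ Ideal.span {y} ⊔ Ideal.span {x} • N := by
    intro s hs
    obtain ⟨q, hq⟩ := (mem_N s).1 hs
    obtain ⟨u, v, rfl⟩ := exists_add_eq_of_isSMulRegular ha (t := s) (p := 0) (q := q)
      (by linear_combination -hq)
    have hu : x * (a * u) = 0 := h.eq_zero_of_dvd_of_dvd ⟨_, rfl⟩
      ⟨q - a * v, by linear_combination hq⟩
    rw [add_comm, mul_comm u]
    exact Submodule.add_mem_sup (Ideal.mem_span_singleton'.2 ⟨v, rfl⟩)
      (Submodule.smul_mem_smul (Ideal.mem_span_singleton_self x)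
        ((mem_N u).2 (h.isExactPair.mul_eq_zero_iff.1 hu)))
  have hx : Ideal.span {x} ≤ Ideal.jacobson ⊥ := by
    rw [IsLocalRing.jacobson_eq_maximalIdeal _ bot_ne_top, Ideal.span_singleton_le_iff_mem]
    exact h.isExactPair.1
  rw [← Ideal.mem_span_singleton]
  exact Submodule.le_of_le_smul_of_le_jacobson_bot (IsNoetherian.noetherian N) hx hN
    ((mem_N t).2 hat)

theorem mem_nonZeroDivisors_of_isSMulRegular (h : IsRegularExactPair x y)
    (ha : IsSMulRegular (A ⧸ Ideal.span {x, y}) a) : a ∈ A⁰ := by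
  refine mem_nonZeroDivisors_iff_left.2 fun t hat => h.eq_zero_of_dvd_of_dvd ?_ ?_
  · exact h.symm.dvd_of_dvd_mul_of_isSMulRegular (Set.pair_comm x y ▸ ha) (hat ▸ dvd_zero x)
  · exact h.dvd_of_dvd_mul_of_isSMulRegular ha (hat ▸ dvd_zero y)

end IsRegularExactPair

end NoetherianLocalRing

lemma isSMulRegular_prod {ι R M : Type*} [CommMonoid R] [MulAction R M] {s : Finset ι} {b : ι → R}
    (hb : ∀ i ∈ s, IsSMulRegular M (b i)) : IsSMulRegular M (∏ i ∈ s, b i) :=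
  Finset.prod_induction b _ (fun _ _ => .mul) (.one M) hb

lemma not_isUnit_prod {ι M : Type*} [CommMonoid M] {s : Finset ι} (hs : s.Nonempty) {b : ι → M}
    (hb : ∀ i, ¬ IsUnit (b i)) : ¬ IsUnit (∏ i ∈ s, b i) := by
  obtain ⟨i, hi⟩ := hs
  exact fun hu => hb i (isUnit_of_dvd_unit (Finset.dvd_prod_of_mem b hi) hu)

open scoped nonZeroDivisors in
theorem main_theorem_general {A : Type u} [CommRing A] [IsLocalRing A] {x y : A}
    (h : IsRegularExactPair x y) (b : ℕ → A) (hu : ∀ n, ¬ IsUnit (b n)) (hb : ∀ n, b n ∈ A⁰)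
    (hb' : ∀ n, IsSMulRegular (A ⧸ Ideal.span {x, y}) (b n))
    (a : ℕ → A) (ha : ∀ n, a n = ∏ i ∈ Finset.range (n + 1), b i) :
    (∀ n, IsTotallyReflexive A (Gmod x y (a n)) ∧
      IsTotallyReflexive A (Hmod x y (a n))) ∧
    (∀ n, ¬ Module.Free A (Gmod x y (a n)) ∧
      ¬ Module.Free A (Hmod x y (a n))) ∧
    (∀ n, IsIndecomposableModule A (Gmod x y (a n)) ∧
      IsIndecomposableModule A (Hmod x y (a n))) ∧
    (∀ m n, m ≠ n → IsEmpty (Gmod x y (a m) ≃ₗ[A] Gmod x y (a n))) ∧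
    (∀ m n, m ≠ n → IsEmpty (Hmod x y (a m) ≃ₗ[A] Hmod x y (a n))) ∧
    (∀ m n, IsEmpty (Gmod x y (a m) ≃ₗ[A] Hmod x y (a n))) ∧
    (∀ m n, Nonempty ((Hmod x y (a m) →ₗ[A] Gmod x y (a n)) ≃ₗ[A]
      Gmod x y (a m * a n))) ∧
    (∀ m n, Nonempty ((Gmod x y (a m) →ₗ[A] Hmod x y (a n)) ≃ₗ[A]
      Hmod x y (a m * a n))) ∧
    (∀ m n, Nonempty ((Gmod x y (a m) →ₗ[A] Gmod x y (a n)) ≃ₗ[A]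
      (Hmod x y (a n) →ₗ[A] Hmod x y (a m)))) ∧
    (∀ m n, n ≤ m → Nonempty ((Gmod x y (a m) →ₗ[A] Gmod x y (a n)) ≃ₗ[A]
      Hmod x y (∏ i ∈ Finset.Ico (n + 1) (m + 1), b i))) ∧
    (∀ m n, m ≤ n → Nonempty ((Gmod x y (a m) →ₗ[A] Gmod x y (a n)) ≃ₗ[A]
      Gmod x y (∏ i ∈ Finset.Ico (m + 1) (n + 1), b i))) := by
  have hmul {m n : ℕ} (hmn : m ≤ n) : a n = a m * ∏ i ∈ Finset.Ico (m + 1) (n + 1), b i := by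
    rw [ha, ha, Finset.prod_range_mul_prod_Ico b (by lia)]
  have nzd (s : Finset ℕ) : ∏ i ∈ s, b i ∈ A⁰ := prod_mem fun i _ => hb i
  have nzd_a (n : ℕ) : a n ∈ A⁰ := ha n ▸ nzd _
  have reg_a (n : ℕ) : IsSMulRegular (A ⧸ Ideal.span {x, y}) (a n) :=
    ha n ▸ isSMulRegular_prod fun i _ => hb' i
  have nonunit_a (n : ℕ) : ¬ IsUnit (a n) := ha n ▸ not_isUnit_prod (by simp) hu
  have nonunit_Ico {m n : ℕ} (hmn : m < n) : ¬ IsUnit (∏ i ∈ Finset.Ico (m + 1) (n + 1), b i) :=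
    not_isUnit_prod (by simpa using hmn) hu
  have hG {m n : ℕ} (hmn : m < n) : IsEmpty (Gmod x y (a m) ≃ₗ[A] Gmod x y (a n)) :=
    hmul hmn.le ▸ h.isEmpty_gmod_equiv_gmod_mul (nzd_a m) (nzd _) (reg_a m) (nonunit_Ico hmn)
  have hH {m n : ℕ} (hmn : m < n) : IsEmpty (Hmod x y (a m) ≃ₗ[A] Hmod x y (a n)) :=
    hmul hmn.le ▸ h.isEmpty_hmod_equiv_hmod_mul (nzd_a m) (nzd _) (reg_a m) (nonunit_Ico hmn)
  refine ⟨fun n => ⟨h.isExactPair.isTotallyReflexive_gmod _,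
      h.isExactPair.isTotallyReflexive_hmod _⟩,
    fun n => ⟨h.not_free_gmod (nzd_a n) (nonunit_a n), h.not_free_hmod (nzd_a n) (nonunit_a n)⟩,
    fun n => ⟨h.isIndecomposableModule_gmod (nzd_a n) (reg_a n),
      h.isIndecomposableModule_hmod (nzd_a n) (reg_a n)⟩,
    fun m n hmn => hmn.lt_or_gt.elim hG fun hnm => ⟨fun e => (hG hnm).false e.symm⟩,
    fun m n hmn => hmn.lt_or_gt.elim hH fun hnm => ⟨fun e => (hH hnm).false e.symm⟩,
    fun m n => h.isEmpty_gmod_equiv_hmod (nzd_a m) (nzd_a n) ((reg_a m).mul (reg_a n))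
      fun hmn => nonunit_a m (isUnit_of_mul_isUnit_left hmn),
    fun m n => h.nonempty_hom_hmod_gmod_equiv (nzd_a m) (nzd_a n) ((reg_a m).mul (reg_a n)),
    fun m n => h.nonempty_hom_gmod_hmod_equiv (nzd_a m) (nzd_a n) ((reg_a m).mul (reg_a n)),
    fun m n => ?_, fun m n hnm => ?_, fun m n hmn => ?_⟩
  · rcases le_total m n with hmn | hnm
    · exact hmul hmn ▸ h.nonempty_hom_gmod_gmod_mul_equiv_hom_hmod (nzd_a m) (nzd _) (reg_a m)
    · exact hmul hnm ▸ h.nonempty_hom_gmod_mul_gmod_equiv_hom_hmod (nzd_a n) (nzd _) (reg_a n)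
  · exact hmul hnm ▸ h.nonempty_hom_gmod_mul_gmod_equiv (nzd_a n) (nzd _) (reg_a n)
  · exact hmul hmn ▸ h.nonempty_hom_gmod_gmod_mul_equiv (nzd_a m) (nzd _) (reg_a m)

/-- **Theorem (6.1), the main theorem.** Let `x, y` be a regular exact pair of
zero divisors and let `(bₙ)` be a sequence of elements of `A` (indexed here by
`n = 0, 1, 2, …`), each regular on `A/(x, y)`.  With `aₙ = b₀ ⋯ bₙ`, the
modules `G_{aₙ}` and `H_{aₙ}` are indecomposable, non-free, totally reflexive
and pairwise non-isomorphic, and the stated `Hom`-identities hold. -/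
theorem main_theorem {A : Type u} [CommRing A] [IsNoetherianRing A]
    [IsLocalRing A] {x y : A} (hxy : IsExactZeroDivisorPair x y)
    (hreg : Ideal.span ({x} : Set A) ⊓ Ideal.span ({y} : Set A) = ⊥)
    (b : ℕ → A)
    (hb : ∀ n, ¬ IsUnit (b n) ∧ Function.Injective
      fun m : A ⧸ Ideal.span ({x, y} : Set A) => b n • m)
    (a : ℕ → A) (ha : ∀ n, a n = ∏ i ∈ Finset.range (n + 1), b i) :
    (∀ n, IsTotallyReflexive A (Gmod x y (a n)) ∧
      IsTotallyReflexive A (Hmod x y (a n))) ∧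
    (∀ n, ¬ Module.Free A (Gmod x y (a n)) ∧
      ¬ Module.Free A (Hmod x y (a n))) ∧
    (∀ n, IsIndecomposableModule A (Gmod x y (a n)) ∧
      IsIndecomposableModule A (Hmod x y (a n))) ∧
    (∀ m n, m ≠ n → IsEmpty (Gmod x y (a m) ≃ₗ[A] Gmod x y (a n))) ∧
    (∀ m n, m ≠ n → IsEmpty (Hmod x y (a m) ≃ₗ[A] Hmod x y (a n))) ∧
    (∀ m n, IsEmpty (Gmod x y (a m) ≃ₗ[A] Hmod x y (a n))) ∧
    (∀ m n, Nonempty ((Hmod x y (a m) →ₗ[A] Gmod x y (a n)) ≃ₗ[A]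
      Gmod x y (a m * a n))) ∧
    (∀ m n, Nonempty ((Gmod x y (a m) →ₗ[A] Hmod x y (a n)) ≃ₗ[A]
      Hmod x y (a m * a n))) ∧
    (∀ m n, Nonempty ((Gmod x y (a m) →ₗ[A] Gmod x y (a n)) ≃ₗ[A]
      (Hmod x y (a n) →ₗ[A] Hmod x y (a m)))) ∧
    (∀ m n, n ≤ m → Nonempty ((Gmod x y (a m) →ₗ[A] Gmod x y (a n)) ≃ₗ[A]
      Hmod x y (∏ i ∈ Finset.Ico (n + 1) (m + 1), b i))) ∧
    (∀ m n, m ≤ n → Nonempty ((Gmod x y (a m) →ₗ[A] Gmod x y (a n)) ≃ₗ[A]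
      Gmod x y (∏ i ∈ Finset.Ico (m + 1) (n + 1), b i))) :=
  have h : IsRegularExactPair x y := ⟨hxy, hreg⟩
  main_theorem_general h b (fun n => (hb n).1)
    (fun n => h.mem_nonZeroDivisors_of_isSMulRegular (hb n).2) (fun n => (hb n).2) a ha
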